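/- In U the straightening relation v₀v₃ = q⁻²v₃v₀ + (q⁻⁴ − 1)v₂v₁ holds. -/

import Mathlib

noncomputable section

abbrev F : Type := RatFunc ℚ

/-- The deformation parameter `q`. -/
def qq : F := RatFunc.X

/-- The quantum integer `[3] = q² + 1 + q⁻²`. -/
def box3 : F := qq ^ 2 + 1 + (qq⁻¹) ^ 2

/-- The generators `E₁, E₂` of the free algebra. -/
def gen (i : Fin 2) : FreeAlgebra F (Fin 2) := FreeAlgebra.ι F i

/-- The quantized Serre relations. -/
inductive SerreRel : FreeAlgebra F (Fin 2) → FreeAlgebra F (Fin 2) → Prop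
  | rel1 : SerreRel
      (gen 0 ^ 3 * gen 1 - box3 • (gen 0 ^ 2 * gen 1 * gen 0)
        + box3 • (gen 0 * gen 1 * gen 0 ^ 2) - gen 1 * gen 0 ^ 3) 0
  | rel2 : SerreRel
      (gen 1 ^ 3 * gen 0 - box3 • (gen 1 ^ 2 * gen 0 * gen 1)
        + box3 • (gen 1 * gen 0 * gen 1 ^ 2) - gen 0 * gen 1 ^ 3) 0

/-- `U = U_q(𝔫)`, the free algebra on `E₁, E₂` modulo the quantized Serre relations. -/
abbrev U : Type := RingQuot SerreRel

def E1 : U := RingQuot.mkAlgHom F SerreRel (gen 0)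
def E2 : U := RingQuot.mkAlgHom F SerreRel (gen 1)

/-- `A = (1/(q+q⁻¹))(E₂E₁ − q⁻²E₁E₂)`. -/
def Aelt : U := (qq + qq⁻¹)⁻¹ • (E2 * E1 - (qq⁻¹) ^ 2 • (E1 * E2))

def v0 : U := E1
def v1 : U := Aelt * v0 - v0 * Aelt
def v2 : U := Aelt * v1 - v1 * Aelt
def v3 : U := Aelt * v2 - v2 * Aelt

/-- `uᵢ = (1 − q⁻²)⁻²ⁱ vᵢ`. -/
def u0 : U := v0
def u1 : U := ((1 - (qq⁻¹) ^ 2)⁻¹) ^ 2 • v1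
def u2 : U := ((1 - (qq⁻¹) ^ 2)⁻¹) ^ 4 • v2
def u3 : U := ((1 - (qq⁻¹) ^ 2)⁻¹) ^ 6 • v3

/-- `p₁ = u₃u₁ − q²u₂²`. -/
def p1 : U := u3 * u1 - qq ^ 2 • u2 ^ 2
/-- `p₀ = u₂u₀ − q²u₁²`. -/
def p0 : U := u2 * u0 - qq ^ 2 • u1 ^ 2

theorem aux_comm {K R : Type*} [Field K] [Ring R] [Algebra K R] (b a s : K) (hab : a * b = 1)
    (hs : s ≠ 0) (h3 : b + 1 + a ≠ 0) (x y A v w P : R)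
    (hA : y * x = s • A + a • (x * y))
    (hv : v = A * x - x * A) (hw : w = y * A - A * y)
    (hxv : x * v = a • (v * x)) (hyw : y * w = b • (w * y))
    (hP : P = y * v - a • (v * y)) :
    P * x - x * P = s • (b • (A * v) - a • (v * A)) ∧ A * P = P * A := by
  have hvx : v * x = b • (x * v) := by
    rw [hxv, smul_smul, mul_comm b a, hab, one_smul]
  have hwy : w * y = a • (y * w) := by
    rw [hyw, smul_smul, hab, one_smul]
  have hAs : s • A = y * x - a • (x * y) := by rw [hA]; abel
  have hAx : A * x = x * A + v := by rw [hv]; abel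
  have hyA : y * A = A * y + w := by rw [hw]; abel
  have hP2 : P = w * x - a • (x * w) := by
    have e : s • (A * A) = s • (A * A) := rfl
    have e1 : A * (s • A) = (s • A) * A := by simp
    rw [hAs] at e1
    rw [hP, hv, hw]
    simp only [mul_sub, sub_mul, mul_smul_comm, smul_mul_assoc, mul_assoc, smul_sub] at e1 ⊢
    linear_combination (norm := module) e1
  have h1 : P * x - x * P = s • (b • (A * v) - a • (v * A)) := by
    have e1 : y * (v * x) = b • (y * x * v) := by rw [hvx]; simp [mul_assoc]
    have e2 : v * (y * x) = s • (v * A) + a • (b • (x * (v * y))) := by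
      rw [hA, mul_add, mul_smul_comm, mul_smul_comm, ← mul_assoc v x y, hvx]; simp [mul_assoc]
    rw [hA] at e1
    rw [hP]
    simp only [mul_sub, sub_mul, add_mul, mul_smul_comm, smul_mul_assoc, mul_assoc, smul_sub, smul_add] at e1 e2 ⊢
    rw [e1, e2]
    match_scalars <;> first | ring1 | linear_combination hab | linear_combination -hab | linear_combination a * hab | linear_combination -a * hab
  have h2 : y * P - P * y = s • (b • (w * A) - a • (A * w)) := by
    have e1 : y * (w * x) = b • (w * (y * x)) := by rw [← mul_assoc, hyw]; simp [mul_assoc]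
    have e2 : y * (x * w) = s • (A * w) + a • (b • (x * (w * y))) := by
      rw [← mul_assoc, hA, add_mul, smul_mul_assoc, smul_mul_assoc, mul_assoc x y w, hyw]; simp
    rw [hA] at e1
    rw [hP2]
    simp only [mul_sub, sub_mul, mul_add, mul_smul_comm, smul_mul_assoc, mul_assoc, smul_sub, smul_add] at e1 e2 ⊢
    rw [e1, e2]
    match_scalars <;> first | ring1 | linear_combination hab | linear_combination -hab | linear_combination a * hab | linear_combination -a * hab
  refine ⟨h1, ?_⟩
  set X := b • (A * v) - a • (v * A) with hX
  set W := b • (w * A) - a • (A * w) with hW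
  have h4 : s • (A * P - P * A) = s • (W * x - a • (x * W) - (y * X - a • (X * y))) := by
    have e0 : s • (A * P - P * A) = (s • A) * P - P * (s • A) := by simp [smul_sub]
    have e1 : s • (W * x - a • (x * W) - (y * X - a • (X * y))) =
      (s • W) * x - a • (x * (s • W)) - (y * (s • X) - a • ((s • X) * y)) := by
      simp only [mul_smul_comm, smul_mul_assoc]; module
    rw [e0, e1, ← h1, ← h2, hAs]
    simp only [mul_sub, sub_mul, mul_smul_comm, smul_mul_assoc, mul_assoc, smul_sub]
    module
  have h5 : A * P - P * A = W * x - a • (x * W) - (y * X - a • (X * y)) :=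
    smul_right_injective R hs h4
  have h6 : W * x - a • (x * W) = b • (P * A + w * v) - a • (A * P + a • (v * w)) := by
    rw [hP2, hW, hv]
    simp only [mul_sub, sub_mul, mul_smul_comm, smul_mul_assoc, mul_assoc, smul_sub]
    module
  have h7 : y * X - a • (X * y) = b • (A * P + w * v) - a • (P * A + a • (v * w)) := by
    rw [hP, hX, hw]
    simp only [mul_sub, sub_mul, mul_smul_comm, smul_mul_assoc, mul_assoc, smul_sub]
    module
  rw [h6, h7] at h5
  have h8 : (b + 1 + a) • (A * P - P * A) = 0 := by
    linear_combination (norm := module) h5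
  exact sub_eq_zero.mp ((smul_eq_zero.mp h8).resolve_left h3)

theorem aux_main {K R : Type*} [Field K] [CharZero K] [Ring R] [Algebra K R] (b a s : K)
    (hab : a * b = 1)
    (hs : s ≠ 0) (h3 : b + 1 + a ≠ 0) (h4 : b + a ≠ 0) (x y A v v2 v3 w P : R)
    (hA : y * x = s • A + a • (x * y))
    (hv : v = A * x - x * A) (hv2 : v2 = A * v - v * A) (hv3 : v3 = A * v2 - v2 * A)
    (hw : w = y * A - A * y)
    (hxv : x * v = a • (v * x)) (hyw : y * w = b • (w * y))
    (hP : P = y * v - a • (v * y)) :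
    x * v3 = a • (v3 * x) + (a ^ 2 - 1) • (v2 * v) := by
  obtain ⟨h1, h2⟩ := aux_comm b a s hab hs h3 x y A v w P hA hv hw hxv hyw hP
  have der : ∀ Z : R, Z * (x * v) - (x * v) * Z = a • (Z * (v * x) - (v * x) * Z) := by
    intro Z; rw [hxv]; simp [smul_sub]
  have Ax : A * x = x * A + v := by rw [hv]; abel
  have Av : A * v = v * A + v2 := by rw [hv2]; abel
  have Av2 : A * v2 = v2 * A + v3 := by rw [hv3]; abel
  -- first derivation
  have d1 : x * v2 = a • (v2 * x) + (a - 1) • (v * v) := by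
    have := der A
    rw [← mul_assoc, ← mul_assoc A v x, Ax, Av, add_mul, add_mul, mul_assoc x A v,
      mul_assoc v A x, Av, Ax] at this
    simp only [mul_add, mul_assoc] at this
    linear_combination (norm := module) this
  have d2 : x * v3 = a • (v3 * x) + (2 * a - 1) • (v2 * v) + (a - 2) • (v * v2) := by
    have e : A * (x * v2) - (x * v2) * A = a • (A * (v2 * x) - (v2 * x) * A)
        + (a - 1) • (A * (v * v) - (v * v) * A) := by
      rw [d1]; simp only [mul_add, add_mul, mul_smul_comm, smul_mul_assoc]; module
    rw [← mul_assoc, ← mul_assoc A v2 x, ← mul_assoc A v v, Ax, Av, Av2, add_mul, add_mul, add_mul,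
      mul_assoc x A, mul_assoc v2 A x, mul_assoc v A v, Av, Ax, Av2] at e
    simp only [mul_add, mul_assoc] at e
    linear_combination (norm := module) e
  -- the second imaginary root vector
  obtain ⟨Q, hQ⟩ : ∃ Q : R, Q = (2 : K) • P + (s * (a - b)) • (A * A) := ⟨_, rfl⟩
  set c := s * (b + a) with hc
  have hc0 : c ≠ 0 := mul_ne_zero hs h4
  have Qx : Q * x = x * Q + c • v2 := by
    rw [hQ, hc]
    have e : A * (A * x) = x * (A * A) + v * A + A * v := by
      rw [Ax, mul_add, ← mul_assoc, Ax, add_mul, mul_assoc]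
    simp only [mul_add, add_mul, mul_smul_comm, smul_mul_assoc, mul_assoc, e]
    rw [hv2]
    linear_combination (norm := module) (2 : K) • h1
  have QA : A * Q = Q * A := by
    rw [hQ]; simp only [mul_add, add_mul, mul_smul_comm, smul_mul_assoc, h2, mul_assoc]
  have Qv : Q * v = v * Q + c • v3 := by
    have e1 : Q * (A * x) = A * (x * Q) + c • (A * v2) := by
      rw [← mul_assoc, ← QA, mul_assoc, Qx, mul_add, mul_smul_comm]
    have e2 : Q * (x * A) = x * (A * Q) + c • (v2 * A) := by
      rw [← mul_assoc, Qx, add_mul, smul_mul_assoc, mul_assoc, QA]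
    rw [hv3, hv]
    simp only [mul_sub, sub_mul, mul_assoc, smul_sub]
    rw [e1, e2]; abel
  have d3 : v2 * v + x * v3 = a • (v3 * x + v * v2) := by
    have := der Q
    rw [← mul_assoc, ← mul_assoc Q v x, Qx, Qv, add_mul, add_mul, mul_assoc x Q v,
      mul_assoc v Q x, Qv, Qx] at this
    simp only [mul_add, mul_assoc, smul_mul_assoc, mul_smul_comm] at this
    apply smul_right_injective R hc0
    simp only
    linear_combination (norm := module) this
  have d4 : v * v2 = a • (v2 * v) := by
    apply smul_right_injective R (two_ne_zero : (2 : K) ≠ 0)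
    simp only
    linear_combination (norm := module) d2 - d3
  rw [d2, d4]
  module

theorem qq_ne : qq ≠ 0 := RatFunc.X_ne_zero

theorem poly_ne (p : Polynomial ℚ) (hp : p.eval 1 ≠ 0) :
    algebraMap (Polynomial ℚ) F p ≠ 0 := by
  intro h
  rw [map_eq_zero_iff _ (IsFractionRing.injective (Polynomial ℚ) F)] at h
  simp [h] at hp

theorem ne_s : qq + qq⁻¹ ≠ 0 := by
  have h := poly_ne (Polynomial.X ^ 2 + 1) (by norm_num)
  have := qq_ne
  simp only [map_add, map_pow, RatFunc.algebraMap_X, map_one] at h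
  change qq ^ 2 + 1 ≠ 0 at h
  intro h'
  apply h
  field_simp at h'
  linear_combination h'

theorem ne_3 : qq ^ 2 + 1 + qq⁻¹ ^ 2 ≠ 0 := by
  have h := poly_ne (Polynomial.X ^ 4 + Polynomial.X ^ 2 + 1) (by norm_num)
  have := qq_ne
  simp only [map_add, map_pow, RatFunc.algebraMap_X, map_one] at h
  change qq ^ 4 + qq ^ 2 + 1 ≠ 0 at h
  intro h'
  apply h
  field_simp at h'
  linear_combination h'

theorem ne_4 : qq ^ 2 + qq⁻¹ ^ 2 ≠ 0 := by
  have h := poly_ne (Polynomial.X ^ 4 + 1) (by norm_num)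
  have := qq_ne
  simp only [map_add, map_pow, RatFunc.algebraMap_X, map_one] at h
  change qq ^ 4 + 1 ≠ 0 at h
  intro h'
  apply h
  field_simp at h'
  linear_combination h'

theorem serre1 : E1 ^ 3 * E2 - box3 • (E1 ^ 2 * E2 * E1) + box3 • (E1 * E2 * E1 ^ 2)
    - E2 * E1 ^ 3 = 0 := by
  have := RingQuot.mkAlgHom_rel F SerreRel.rel1
  simpa only [map_sub, map_add, map_mul, map_pow, map_smul, map_zero, E1, E2] using this

theorem serre2 : E2 ^ 3 * E1 - box3 • (E2 ^ 2 * E1 * E2) + box3 • (E2 * E1 * E2 ^ 2)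
    - E1 * E2 ^ 3 = 0 := by
  have := RingQuot.mkAlgHom_rel F SerreRel.rel2
  simpa only [map_sub, map_add, map_mul, map_pow, map_smul, map_zero, E1, E2] using this

theorem serre_conv {K R : Type*} [Field K] [Ring R] [Algebra K R] (b a s : K)
    (hab : a * b = 1) (x y A : R)
    (hA : A = s⁻¹ • (y * x - a • (x * y)))
    (h1 : x ^ 3 * y - (b + 1 + a) • (x ^ 2 * y * x) + (b + 1 + a) • (x * y * x ^ 2)
      - y * x ^ 3 = 0)
    (h2 : y ^ 3 * x - (b + 1 + a) • (y ^ 2 * x * y) + (b + 1 + a) • (y * x * y ^ 2)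
      - x * y ^ 3 = 0) :
    x * (A * x - x * A) = a • ((A * x - x * A) * x) ∧
    y * (y * A - A * y) = b • ((y * A - A * y) * y) := by
  subst hA
  simp only [pow_succ, pow_zero, one_mul, mul_assoc] at h1 h2
  constructor
  · simp only [mul_sub, sub_mul, mul_smul_comm, smul_mul_assoc, mul_assoc, smul_sub]
    linear_combination (norm := skip) (s⁻¹ * a) • h1
    match_scalars <;> first | ring1 | linear_combination s⁻¹ * hab | linear_combination -s⁻¹ * hab
  · simp only [mul_sub, sub_mul, mul_smul_comm, smul_mul_assoc, mul_assoc, smul_sub]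
    linear_combination (norm := skip) s⁻¹ • h2
    match_scalars <;> first | ring1 | linear_combination s⁻¹ * hab | linear_combination -s⁻¹ * hab

/-- In `U` the straightening relation `v₀v₃ = q⁻²v₃v₀ + (q⁻⁴ − 1)v₂v₁` holds. -/
theorem stmt2 :
    v0 * v3 = qq ^ (-2 : ℤ) • (v3 * v0) + (qq ^ (-4 : ℤ) - 1) • (v2 * v1) := by
  have hab : (qq⁻¹) ^ 2 * qq ^ 2 = 1 := by
    have := qq_ne
    field_simp
  obtain ⟨hx, hy⟩ := serre_conv (qq ^ 2) ((qq⁻¹) ^ 2) (qq + qq⁻¹) hab E1 E2 Aelt rfl serre1 serre2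
  have key := aux_main (qq ^ 2) ((qq⁻¹) ^ 2) (qq + qq⁻¹) hab ne_s ne_3 ne_4 E1 E2 Aelt v1 v2 v3
    _ _ (by rw [Aelt, smul_smul, mul_inv_cancel₀ ne_s, one_smul]; abel) rfl rfl rfl rfl hx hy rfl
  have e2 : qq ^ (-2 : ℤ) = (qq⁻¹) ^ 2 := by
    rw [zpow_neg, inv_pow]; rfl
  have e4 : qq ^ (-4 : ℤ) = ((qq⁻¹) ^ 2) ^ 2 := by
    rw [zpow_neg, ← pow_mul, inv_pow]; rfl
  rw [e2, e4]
  exact key
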